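/- arXiv:2605.03867 — 2 statements merged into one kernel-verified Lean document; each statement's English description precedes it below -/
import Mathlib

section
/- Let d ≥ 2 and n be positive integers, let (x_i)_{i=1}^n be independent random vectors each drawn from the uniform probability measure on the sphere of radius sqrt(d/n) in ℝ^d, and let S = Σ_{i=1}^n x_i x_i^* be the associated frame operator. Then for every ε ≥ 0, the probability that ‖S − I_d‖_op ≥ ε is at most 2d · exp( − n ε² / (2d − 2 + 2ε(d−1)/3) ). -/
open MeasureTheory ProbabilityTheory Real

noncomputable section

/-- The frame operator `S v = ∑ i, ⟪x i, v⟫ • x i` of a finite family of vectors in `ℝ^d`,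
as a continuous linear map on Euclidean space. -/
def frameOperator {d n : ℕ} (x : Fin n → EuclideanSpace ℝ (Fin d)) :
    EuclideanSpace ℝ (Fin d) →L[ℝ] EuclideanSpace ℝ (Fin d) :=
  ∑ i, (innerSL ℝ (x i)).smulRight (x i)

/-!
The Laplace transform method reduces the tail of `‖S - 1‖` to bounding `𝔼 tr exp (θ (S - 1))` for
`θ` of either sign. The random vectors are absorbed one at a time through a Golden–Thompson type
inequality for a projection `P`,
`tr exp (H + t P) ≤ tr exp H + (exp t - 1) tr (P exp H)`,
whose right side is linear in `P`, so that its expectation only involves the second moments of the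
vector, and these form a multiple of the identity. The inequality itself follows from Grönwall's
lemma for `t ↦ tr (P exp (H + t P))`, the derivative of the left side. What remains is the moment
generating function of a centred Bernoulli variable, to which Bernstein's estimate applies.
-/

open InnerProductSpace NormedSpace Filter Module
open scoped Topology

variable {E : Type*} [NormedAddCommGroup E] [InnerProductSpace ℝ E]

theorem exp_apply_of_apply_eq_smul [CompleteSpace E] {A : E →L[ℝ] E} {v : E} {l : ℝ}
    (h : A v = l • v) : exp A v = Real.exp l • v := by
  have hpow (k : ℕ) : (A ^ k) v = l ^ k • v := by
    induction k with
    | zero => simp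
    | succ k ih => rw [pow_succ, mul_apply_eq_comp, h, map_smul, ih, smul_smul, pow_succ']
  have hA := (exp_series_hasSum_exp' (𝕂 := ℝ) A).mapL (ContinuousLinearMap.apply ℝ E v)
  have hl := (exp_series_hasSum_exp' (𝕂 := ℝ) l).smul_const v
  rw [← Real.exp_eq_exp_ℝ] at hl
  exact hA.unique (hl.congr_fun fun k => by simp [hpow, smul_smul])

section Trace

variable [FiniteDimensional ℝ E]

/-- The trace of an operator on a finite-dimensional space, as a continuous linear functional on
the space of operators, so that it commutes with limits, sums and scalars by the general API. -/
def opTrace : (E →L[ℝ] E) →L[ℝ] ℝ :=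
  LinearMap.toContinuousLinearMap (LinearMap.trace ℝ E ∘ₗ ContinuousLinearMap.coeLM ℝ)

theorem opTrace_mul_comm (A B : E →L[ℝ] E) : opTrace (A * B) = opTrace (B * A) :=
  LinearMap.trace_mul_comm ℝ (A : E →ₗ[ℝ] E) (B : E →ₗ[ℝ] E)

theorem opTrace_rankOne (x y : E) : opTrace (rankOne ℝ x y) = ⟪y, x⟫_ℝ :=
  trace_rankOne x y

theorem opTrace_eq_sum_inner {ι : Type*} [Fintype ι] (b : OrthonormalBasis ι ℝ E)
    (A : E →L[ℝ] E) : opTrace A = ∑ i, ⟪b i, A (b i)⟫_ℝ :=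
  LinearMap.trace_eq_sum_inner (A : E →ₗ[ℝ] E) b

theorem opTrace_mul_eq_sum_inner_mul_inner {ι κ : Type*} [Fintype ι] [Fintype κ]
    (a : OrthonormalBasis ι ℝ E) (b : OrthonormalBasis κ ℝ E) (A B : E →L[ℝ] E) :
    opTrace (A * B) = ∑ i, ∑ j, ⟪a i, A (b j)⟫_ℝ * ⟪b j, B (a i)⟫_ℝ := by
  simp only [opTrace_eq_sum_inner a, ContinuousLinearMap.mul_def,
    ContinuousLinearMap.comp_apply, ← ContinuousLinearMap.adjoint_inner_left A,
    b.sum_inner_mul_inner]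

end Trace

section TraceInequalities

theorem sub_mul_exp_le_exp_sub_exp (x y : ℝ) : (x - y) * rexp y ≤ rexp x - rexp y := by
  have h := mul_le_mul_of_nonneg_right (add_one_le_exp (x - y)) (exp_pos y).le
  rw [← Real.exp_add, sub_add_cancel] at h
  linarith

-- For `0 ≤ u` this is `tanh (u / 2) ≤ u / 2`; replacing `u` by `-u` divides both sides by `exp u`.
theorem mul_exp_sub_one_le (u : ℝ) : u * (rexp u - 1) ≤ u ^ 2 * (rexp u + 1) / 2 := by
  wlog hu : 0 ≤ u generalizing u
  · have h := mul_le_mul_of_nonneg_right (this (-u) (by linarith)) (exp_pos u).le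
    have hexp : rexp (-u) * rexp u = 1 := by rw [← Real.exp_add, neg_add_cancel, Real.exp_zero]
    linear_combination h + (u + u ^ 2 / 2) * hexp
  have h := le_log_one_add_of_nonneg (sub_nonneg.2 (one_le_exp hu))
  rw [add_sub_cancel, Real.log_exp, div_le_iff₀ (by linarith [exp_pos u])] at h
  nlinarith [mul_le_mul_of_nonneg_left h hu]

theorem sub_mul_exp_sub_exp_le (x y : ℝ) :
    (x - y) * (rexp x - rexp y) ≤ (x - y) ^ 2 * (rexp x + rexp y) / 2 := by
  have h := mul_le_mul_of_nonneg_right (mul_exp_sub_one_le (x - y)) (exp_pos y).le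
  have hexp : rexp (x - y) * rexp y = rexp x := by rw [← Real.exp_add, sub_add_cancel]
  linear_combination h + ((x - y) ^ 2 / 2 - (x - y)) * hexp

theorem inner_sub_apply_of_apply_eq_smul {A B : E →L[ℝ] E} (hA : A.IsSymmetric) {v w : E} {α β : ℝ}
    (hv : A v = α • v) (hw : B w = β • w) : ⟪v, (A - B) w⟫_ℝ = (α - β) * ⟪v, w⟫_ℝ := by
  have hvw : ⟪v, A w⟫_ℝ = α * ⟪v, w⟫_ℝ := by
    rw [← real_inner_smul_left, ← hv]; exact (hA v w).symm
  rw [sub_apply, inner_sub_right, hvw, hw, real_inner_smul_right, sub_mul]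

variable [FiniteDimensional ℝ E]

theorem exists_orthonormalBasis_apply_eq_smul {A : E →L[ℝ] E} (hA : IsSelfAdjoint A) :
    ∃ (a : OrthonormalBasis (Fin (finrank ℝ E)) ℝ E) (α : Fin (finrank ℝ E) → ℝ),
      ∀ i, A (a i) = α i • a i :=
  ⟨hA.isSymmetric.eigenvectorBasis rfl, hA.isSymmetric.eigenvalues rfl,
    hA.isSymmetric.apply_eigenvectorBasis rfl⟩

-- In eigenbases `a` of `A` and `b` of `B`, both sides become sums over `i, j` with the nonnegative
-- weights `⟪a i, b j⟫ ^ 2`, so the inequality reduces to the scalar one between the eigenvalues.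
theorem opTrace_sub_mul_exp_le {A B : E →L[ℝ] E} (hA : IsSelfAdjoint A) (hB : IsSelfAdjoint B) :
    opTrace ((A - B) * exp B) ≤ opTrace (exp A) - opTrace (exp B) := by
  obtain ⟨a, α, ha⟩ := exists_orthonormalBasis_apply_eq_smul hA
  obtain ⟨b, β, hb⟩ := exists_orthonormalBasis_apply_eq_smul hB
  have hD (i j) := inner_sub_apply_of_apply_eq_smul hA.isSymmetric (ha i) (hb j)
  have hexpA (i) := exp_apply_of_apply_eq_smul (ha i)
  have hexpB (j) := exp_apply_of_apply_eq_smul (hb j)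
  rw [← mul_one ((A - B) * exp B), ← one_mul (exp A), ← mul_one (exp B)]
  simp only [opTrace_mul_eq_sum_inner_mul_inner a b, ← Finset.sum_sub_distrib]
  gcongr with i _ j _
  have := mul_le_mul_of_nonneg_right (sub_mul_exp_le_exp_sub_exp (α i) (β j))
    (sq_nonneg ⟪a i, b j⟫_ℝ)
  simp only [mul_one, mul_apply_eq_comp, one_apply_eq_self, hexpA, hexpB, map_smul,
    real_inner_smul_right, hD, real_inner_comm (a i) (b j)] at this ⊢
  linarith

theorem opTrace_sub_mul_exp_sub_exp_le {A B : E →L[ℝ] E} (hA : IsSelfAdjoint A)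
    (hB : IsSelfAdjoint B) :
    opTrace ((A - B) * (exp A - exp B)) ≤
      opTrace ((A - B) * (A - B) * (exp A + exp B)) / 2 := by
  obtain ⟨a, α, ha⟩ := exists_orthonormalBasis_apply_eq_smul hA
  obtain ⟨b, β, hb⟩ := exists_orthonormalBasis_apply_eq_smul hB
  have hD (i j) := inner_sub_apply_of_apply_eq_smul hA.isSymmetric (ha i) (hb j)
  have hD' (i j) : ⟪b j, (A - B) (a i)⟫_ℝ = (α i - β j) * ⟪a i, b j⟫_ℝ := by
    rw [← hD, real_inner_comm]; exact (hA.sub hB).isSymmetric _ _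
  have hexpA (i) := exp_apply_of_apply_eq_smul (ha i)
  have hexpB (j) := exp_apply_of_apply_eq_smul (hb j)
  have hleft : opTrace ((A - B) * (exp A - exp B)) = ∑ i, ∑ j,
      (α i - β j) * (rexp (α i) - rexp (β j)) * ⟪a i, b j⟫_ℝ ^ 2 := by
    rw [mul_sub, map_sub, ← mul_one ((A - B) * exp B)]
    simp only [opTrace_mul_eq_sum_inner_mul_inner a b, ← Finset.sum_sub_distrib, mul_apply_eq_comp,
      one_apply_eq_self, hexpA, hexpB, map_smul, real_inner_smul_right, hD]
    exact Finset.sum_congr rfl fun i _ => Finset.sum_congr rfl fun j _ => by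
      rw [real_inner_comm]; ring
  have hright : opTrace ((A - B) * (A - B) * (exp A + exp B)) = ∑ i, ∑ j,
      (α i - β j) ^ 2 * (rexp (α i) + rexp (β j)) * ⟪a i, b j⟫_ℝ ^ 2 := by
    rw [mul_add, map_add, mul_assoc, mul_assoc, opTrace_mul_comm (A - B) ((A - B) * exp B)]
    simp only [opTrace_mul_eq_sum_inner_mul_inner a b, ← Finset.sum_add_distrib, mul_apply_eq_comp,
      hexpA, hexpB, map_smul, real_inner_smul_right, hD, hD']
    exact Finset.sum_congr rfl fun i _ => Finset.sum_congr rfl fun j _ => by ring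
  rw [hleft, hright, Finset.sum_div]
  simp only [Finset.sum_div]
  gcongr with i _ j _
  have := mul_le_mul_of_nonneg_right (sub_mul_exp_sub_exp_le (α i) (β j))
    (sq_nonneg ⟪a i, b j⟫_ℝ)
  linarith

end TraceInequalities

section GoldenThompson

theorem hasDerivAt_of_sub_mul_le {f g : ℝ → ℝ} {t : ℝ} (hg : ContinuousAt g t)
    (h : ∀ r s, (r - s) * g s ≤ f r - f s) : HasDerivAt f (g t) t := by
  rw [hasDerivAt_iff_isLittleO]
  have hbound (s : ℝ) : ‖f s - f t - (s - t) • g t‖ ≤ ‖(g s - g t) * (s - t)‖ := by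
    have hst := h s t
    have hts := h t s
    rw [smul_eq_mul, Real.norm_of_nonneg (by linarith)]
    exact le_trans (by linarith) (le_abs_self _)
  have hzero : Tendsto (fun s => g s - g t) (𝓝 t) (𝓝 0) := by
    simpa using hg.tendsto.sub_const (g t)
  refine (Asymptotics.isBigO_of_le _ hbound).trans_isLittleO ?_
  simpa using ((Asymptotics.isLittleO_one_iff ℝ).2 hzero).mul_isBigO
    (Asymptotics.isBigO_refl (fun s => s - t) (𝓝 t))

theorem le_exp_mul_of_forall_sub_le {h : ℝ → ℝ} (hcont : Continuous h)
    (hle : ∀ s t, s < t → h t - h s ≤ (t - s) * ((h t + h s) / 2)) {s t : ℝ} (hst : s ≤ t) :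
    h t ≤ rexp (t - s) * h s := by
  have hliminf (x : ℝ) (r : ℝ) (hr : h x < r) : ∃ᶠ z in 𝓝[>] x, (z - x)⁻¹ * (h z - h x) < r := by
    have hmean : Tendsto (fun z => (h z + h x) / 2) (𝓝[>] x) (𝓝 (h x)) := by
      have := ((hcont.tendsto x).add_const (h x)).div_const 2
      rw [add_self_div_two] at this
      exact this.mono_left nhdsWithin_le_nhds
    refine Eventually.frequently ?_
    filter_upwards [hmean.eventually_lt_const hr, self_mem_nhdsWithin] with z hz hxz
    refine lt_of_le_of_lt ?_ hz
    rw [inv_mul_le_iff₀ (sub_pos.2 hxz)]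
    exact hle x z hxz
  have := le_gronwallBound_of_liminf_deriv_right_le (f := h) (f' := h) (δ := h s) (K := 1) (ε := 0)
    (a := s) (b := t) hcont.continuousOn (fun x _ => hliminf x) le_rfl
    (fun x _ => by simp) t (Set.right_mem_Icc.2 hst)
  rwa [gronwallBound_ε0, one_mul, mul_comm] at this

variable [FiniteDimensional ℝ E]

theorem continuous_exp_clm : Continuous (exp : (E →L[ℝ] E) → E →L[ℝ] E) :=
  let _ : NormedAlgebra ℚ (E →L[ℝ] E) := NormedAlgebra.restrictScalars ℚ ℝ _
  exp_continuous

theorem hasDerivAt_opTrace_exp_add_smul {H B : E →L[ℝ] E} (hH : IsSelfAdjoint H)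
    (hB : IsSelfAdjoint B) (t : ℝ) :
    HasDerivAt (fun s : ℝ => opTrace (exp (H + s • B))) (opTrace (B * exp (H + t • B))) t := by
  have hself (s : ℝ) : IsSelfAdjoint (H + s • B) := hH.add ((IsSelfAdjoint.all s).smul hB)
  refine hasDerivAt_of_sub_mul_le (g := fun s : ℝ => opTrace (B * exp (H + s • B)))
    (Continuous.continuousAt ?_) fun r s => ?_
  · have := continuous_exp_clm (E := E)
    fun_prop
  · have := opTrace_sub_mul_exp_le (hself r) (hself s)
    rwa [add_sub_add_left_eq_sub, ← sub_smul, smul_mul_assoc, map_smul, smul_eq_mul] at this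

-- Since `P * P = P`, the second trace inequality says that `h s = tr (P exp (H + s P))` satisfies
-- `h' ≤ h` in integrated form.
theorem opTrace_mul_exp_add_smul_le {H P : E →L[ℝ] E} (hH : IsSelfAdjoint H)
    (hP : IsStarProjection P) {s t : ℝ} (hst : s ≤ t) :
    opTrace (P * exp (H + t • P)) ≤ rexp (t - s) * opTrace (P * exp (H + s • P)) := by
  have hself (s : ℝ) : IsSelfAdjoint (H + s • P) :=
    hH.add ((IsSelfAdjoint.all s).smul hP.isSelfAdjoint)
  refine le_exp_mul_of_forall_sub_le (h := fun s : ℝ => opTrace (P * exp (H + s • P))) ?_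
    (fun r u hru => ?_) hst
  · have := continuous_exp_clm (E := E)
    fun_prop
  · have := opTrace_sub_mul_exp_sub_exp_le (hself u) (hself r)
    rw [add_sub_add_left_eq_sub, ← sub_smul, smul_mul_smul_comm, hP.isIdempotentElem.eq] at this
    simp only [smul_mul_assoc, mul_sub, mul_add, map_smul, map_sub, map_add, smul_eq_mul] at this
    refine le_of_mul_le_mul_left ?_ (sub_pos.2 hru)
    linarith

theorem opTrace_exp_add_smul_le {H P : E →L[ℝ] E} (hH : IsSelfAdjoint H)
    (hP : IsStarProjection P) (t : ℝ) :
    opTrace (exp (H + t • P)) ≤ opTrace (exp H) + (rexp t - 1) * opTrace (P * exp H) := by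
  set h : ℝ → ℝ := fun s => opTrace (P * exp (H + s • P)) with h_def
  set G : ℝ → ℝ := fun s => opTrace (exp (H + s • P)) - rexp s * h 0
  have hG (s : ℝ) : HasDerivAt G (h s - rexp s * h 0) s :=
    (hasDerivAt_opTrace_exp_add_smul hH hP.isSelfAdjoint s).sub
      ((Real.hasDerivAt_exp s).mul_const (h 0))
  have hG_diff : Differentiable ℝ G := fun s => (hG s).differentiableAt
  have hG0 : G t ≤ G 0 := by
    rcases le_total 0 t with ht | ht
    · refine antitoneOn_of_deriv_nonpos (convex_Ici 0) hG_diff.continuous.continuousOn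
        hG_diff.differentiableOn (fun s hs => ?_) Set.self_mem_Ici ht ht
      rw [interior_Ici] at hs
      have := opTrace_mul_exp_add_smul_le hH hP (le_of_lt hs)
      rw [sub_zero] at this
      rw [(hG s).deriv]
      exact sub_nonpos.2 this
    · refine monotoneOn_of_deriv_nonneg (convex_Iic 0) hG_diff.continuous.continuousOn
        hG_diff.differentiableOn (fun s hs => ?_) ht Set.self_mem_Iic ht
      rw [interior_Iic] at hs
      have := mul_le_mul_of_nonneg_left (opTrace_mul_exp_add_smul_le hH hP (le_of_lt hs))
        (exp_pos s).le
      rw [zero_sub, ← mul_assoc, ← Real.exp_add, add_neg_cancel, Real.exp_zero, one_mul] at this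
      rw [(hG s).deriv]
      exact sub_nonneg.2 this
  simp only [G, h_def, zero_smul, add_zero, Real.exp_zero] at hG0
  linarith

theorem opTrace_exp_add_smul_rankOne_le {H : E →L[ℝ] E} (hH : IsSelfAdjoint H) (θ : ℝ) (x : E) :
    opTrace (exp (H + θ • rankOne ℝ x x)) ≤
      opTrace (exp H) + (rexp (θ * ‖x‖ ^ 2) - 1) / ‖x‖ ^ 2 * ⟪x, exp H x⟫_ℝ := by
  rcases eq_or_ne x 0 with rfl | hx
  · simp
  have hsq : ‖x‖ ^ 2 ≠ 0 := pow_ne_zero 2 (norm_ne_zero_iff.2 hx)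
  have hP : IsStarProjection ((‖x‖ ^ 2)⁻¹ • rankOne ℝ x x) := by
    have := isStarProjection_rankOne_self (𝕜 := ℝ) (norm_smul_inv_norm (𝕜 := ℝ) hx)
    simpa [smul_smul, ← sq] using this
  have := opTrace_exp_add_smul_le hH hP (θ * ‖x‖ ^ 2)
  rwa [smul_smul, mul_inv_cancel_right₀ hsq, smul_mul_assoc, map_smul, opTrace_mul_comm,
    ContinuousLinearMap.mul_def, comp_rankOne, opTrace_rankOne, smul_eq_mul,
    ← mul_assoc, ← div_eq_mul_inv] at this

end GoldenThompson

section OperatorNorm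

variable [FiniteDimensional ℝ E]

theorem opTrace_exp_eq_sum_exp_eigenvalues {A : E →L[ℝ] E} (hA : IsSelfAdjoint A) :
    opTrace (exp A) = ∑ i, rexp (hA.isSymmetric.eigenvalues rfl i) := by
  rw [opTrace_eq_sum_inner (hA.isSymmetric.eigenvectorBasis rfl)]
  refine Finset.sum_congr rfl fun i _ => ?_
  rw [exp_apply_of_apply_eq_smul (hA.isSymmetric.apply_eigenvectorBasis rfl i),
    real_inner_smul_right, real_inner_self_eq_norm_sq, OrthonormalBasis.norm_eq_one]
  simp

theorem opTrace_exp_nonneg {A : E →L[ℝ] E} (hA : IsSelfAdjoint A) : 0 ≤ opTrace (exp A) := by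
  rw [opTrace_exp_eq_sum_exp_eigenvalues hA]
  positivity

theorem exp_le_opTrace_exp_of_hasEigenvalue {A : E →L[ℝ] E} (hA : IsSelfAdjoint A) {l : ℝ}
    (hl : End.HasEigenvalue (A : End ℝ E) l) : rexp l ≤ opTrace (exp A) := by
  obtain ⟨i, rfl⟩ := hA.isSymmetric.exists_eigenvalues_eq rfl hl
  rw [opTrace_exp_eq_sum_exp_eigenvalues hA]
  exact Finset.single_le_sum (f := fun i => rexp (hA.isSymmetric.eigenvalues rfl i))
    (fun i _ => (exp_pos _).le) (Finset.mem_univ i)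

theorem exists_hasEigenvalue_abs_eq_opNorm [Nontrivial E] {A : E →L[ℝ] E} (hA : IsSelfAdjoint A) :
    ∃ l : ℝ, End.HasEigenvalue (A : End ℝ E) l ∧ |l| = ‖A‖ := by
  have hne : (spectrum ℝ A).Nonempty := by
    refine ⟨hA.isSymmetric.eigenvalues rfl ⟨0, finrank_pos⟩, ?_⟩
    rw [ContinuousLinearMap.spectrum_eq, ← End.hasEigenvalue_iff_mem_spectrum]
    exact hA.isSymmetric.hasEigenvalue_eigenvalues rfl _
  obtain ⟨l, hl, hlA⟩ := spectrum.exists_nnnorm_eq_spectralRadius_of_nonempty hne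
  rw [A.spectralRadius_eq_nnnorm hA, ENNReal.coe_inj] at hlA
  refine ⟨l, ?_, congrArg NNReal.toReal hlA⟩
  rwa [End.hasEigenvalue_iff_mem_spectrum, ← ContinuousLinearMap.spectrum_eq]

theorem exp_mul_opNorm_le [Nontrivial E] {A : E →L[ℝ] E} (hA : IsSelfAdjoint A) (θ : ℝ) :
    rexp (θ * ‖A‖) ≤ opTrace (exp (θ • A)) + opTrace (exp ((-θ) • A)) := by
  have hself (c : ℝ) : IsSelfAdjoint (c • A) := (IsSelfAdjoint.all c).smul hA
  obtain ⟨l, hl, hlA⟩ := exists_hasEigenvalue_abs_eq_opNorm hA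
  have heigen (c : ℝ) : End.HasEigenvalue ((c • A : E →L[ℝ] E) : End ℝ E) (c * l) := by
    obtain ⟨v, hv, hv0⟩ := hl.exists_hasEigenvector
    refine End.hasEigenvalue_of_hasEigenvector (x := v) ⟨End.mem_eigenspace_iff.2 ?_, hv0⟩
    exact (congrArg (c • ·) (End.mem_eigenspace_iff.1 hv)).trans (smul_smul c l v)
  rcases abs_choice l with h | h <;> rw [← hlA, h]
  · exact (exp_le_opTrace_exp_of_hasEigenvalue (hself θ) (heigen θ)).trans
      (le_add_of_nonneg_right (opTrace_exp_nonneg (hself _)))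
  · rw [← neg_mul_comm]
    exact (exp_le_opTrace_exp_of_hasEigenvalue (hself (-θ)) (heigen (-θ))).trans
      (le_add_of_nonneg_left (opTrace_exp_nonneg (hself _)))

end OperatorNorm

section Isotropy

theorem continuous_rankOne_self : Continuous fun x : E => rankOne ℝ x x :=
  (rankOne ℝ).continuous.clm_apply continuous_id

theorem continuous_opTrace_exp_add_smul_rankOne [FiniteDimensional ℝ E] (H : E →L[ℝ] E) (θ : ℝ) :
    Continuous fun x : E => opTrace (exp (H + θ • rankOne ℝ x x)) := by
  have hrank := continuous_rankOne_self (E := E)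
  have hexp := continuous_exp_clm (E := E)
  fun_prop

variable [MeasurableSpace E]

/-- `μ` is carried by the sphere of radius `R` around the origin and has the second moments of the
uniform measure on that sphere: its covariance form is a multiple of the inner product. These are
the laws of the random vectors to which the concentration argument applies. -/
structure IsIsotropicOnSphere (μ : Measure E) (R : ℝ) : Prop where
  ae_norm_eq : ∀ᵐ x ∂μ, ‖x‖ = R
  integral_inner_sq (v : E) : ∫ x, ⟪v, x⟫_ℝ ^ 2 ∂μ = R ^ 2 / finrank ℝ E * ‖v‖ ^ 2

variable [BorelSpace E] {μ : Measure E} {R : ℝ}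

theorem integral_inner_sq_eq_of_norm_eq (hinv : ∀ Q : E ≃ₗᵢ[ℝ] E, μ.map Q = μ) {v w : E}
    (hvw : ‖v‖ = ‖w‖) : ∫ x, ⟪v, x⟫_ℝ ^ 2 ∂μ = ∫ x, ⟪w, x⟫_ℝ ^ 2 ∂μ := by
  set Q := Submodule.reflection (ℝ ∙ (v - w))ᗮ
  have hQ : Q v = w := Submodule.reflection_sub hvw
  calc ∫ x, ⟪v, x⟫_ℝ ^ 2 ∂μ = ∫ x, ⟪w, Q x⟫_ℝ ^ 2 ∂μ := by
        simp only [← hQ, LinearIsometryEquiv.inner_map_map]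
    _ = ∫ x, ⟪w, x⟫_ℝ ^ 2 ∂(μ.map Q) :=
        (integral_map_equiv Q.toHomeomorph.toMeasurableEquiv fun x => ⟪w, x⟫_ℝ ^ 2).symm
    _ = ∫ x, ⟪w, x⟫_ℝ ^ 2 ∂μ := by rw [hinv]

variable [FiniteDimensional ℝ E]

theorem integrable_of_continuous_of_ae_norm_eq [IsFiniteMeasure μ] {f : E → ℝ}
    (hf : Continuous f) (hμ : ∀ᵐ x ∂μ, ‖x‖ = R) : Integrable f μ := by
  obtain ⟨C, hC⟩ := (isCompact_sphere (0 : E) R).exists_bound_of_continuousOn hf.continuousOn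
  exact .of_bound hf.aestronglyMeasurable C <| hμ.mono fun x hx => hC x (by simpa using hx)

theorem isIsotropicOnSphere_of_map_eq [IsProbabilityMeasure μ]
    (hsupp : μ (Metric.sphere 0 R) = 1) (hinv : ∀ Q : E ≃ₗᵢ[ℝ] E, μ.map Q = μ) :
    IsIsotropicOnSphere μ R := by
  have hμ : ∀ᵐ x ∂μ, ‖x‖ = R := by
    filter_upwards [(mem_ae_iff_prob_eq_one Metric.isClosed_sphere.measurableSet).2 hsupp] with x hx
      using mem_sphere_zero_iff_norm.1 hx
  refine ⟨hμ, fun v => ?_⟩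
  rcases subsingleton_or_nontrivial E with _ | _
  · simp [Subsingleton.elim v 0]
  set b := stdOrthonormalBasis ℝ E
  have hsum : (finrank ℝ E : ℝ) * ∫ x, ⟪v, x⟫_ℝ ^ 2 ∂μ = ‖v‖ ^ 2 * R ^ 2 := by
    calc (finrank ℝ E : ℝ) * ∫ x, ⟪v, x⟫_ℝ ^ 2 ∂μ
        = ∑ i, ∫ x, ⟪‖v‖ • b i, x⟫_ℝ ^ 2 ∂μ := by
          rw [Finset.sum_congr rfl fun i _ => integral_inner_sq_eq_of_norm_eq hinv
            (w := v) (by rw [norm_smul, norm_norm, b.norm_eq_one, mul_one])]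
          simp
      _ = ∫ x, ∑ i, ⟪‖v‖ • b i, x⟫_ℝ ^ 2 ∂μ :=
          (integral_finsetSum _ fun i _ =>
            integrable_of_continuous_of_ae_norm_eq (by fun_prop) hμ).symm
      _ = ∫ x, ‖v‖ ^ 2 * R ^ 2 ∂μ := by
          refine integral_congr_ae (hμ.mono fun x hx => ?_)
          simp only [real_inner_smul_left, mul_pow, ← Finset.mul_sum, b.sum_sq_inner_right, hx]
      _ = ‖v‖ ^ 2 * R ^ 2 := by simp
  have hd : (finrank ℝ E : ℝ) ≠ 0 := Nat.cast_ne_zero.2 finrank_pos.ne'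
  rw [eq_div_of_mul_eq hd ((mul_comm _ _).trans hsum)]
  ring

theorem IsIsotropicOnSphere.integral_inner_apply_self [IsFiniteMeasure μ]
    (h : IsIsotropicOnSphere μ R) {A : E →L[ℝ] E} (hA : IsSelfAdjoint A) :
    ∫ x, ⟪x, A x⟫_ℝ ∂μ = R ^ 2 / finrank ℝ E * opTrace A := by
  obtain ⟨a, α, ha⟩ := exists_orthonormalBasis_apply_eq_smul hA
  have hinner (x : E) : ⟪x, A x⟫_ℝ = ∑ i, α i * ⟪a i, x⟫_ℝ ^ 2 := by
    rw [← a.sum_inner_mul_inner]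
    refine Finset.sum_congr rfl fun i _ => ?_
    have : ⟪a i, A x⟫_ℝ = α i * ⟪a i, x⟫_ℝ := by
      rw [← real_inner_smul_left, ← ha]; exact (hA.isSymmetric (a i) x).symm
    rw [this, real_inner_comm]; ring
  have htrace : opTrace A = ∑ i, α i := by
    rw [opTrace_eq_sum_inner a]
    simp [ha, real_inner_smul_right]
  simp only [hinner]
  rw [integral_finsetSum _ fun i _ =>
    integrable_of_continuous_of_ae_norm_eq (by fun_prop) h.ae_norm_eq]
  simp only [integral_const_mul, h.integral_inner_sq, a.norm_eq_one, htrace, ← Finset.sum_mul]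
  ring

theorem IsIsotropicOnSphere.integral_opTrace_exp_add_smul_rankOne_le [IsProbabilityMeasure μ]
    (h : IsIsotropicOnSphere μ R) {H : E →L[ℝ] E} (hH : IsSelfAdjoint H) (θ : ℝ) :
    ∫ x, opTrace (exp (H + θ • rankOne ℝ x x)) ∂μ ≤
      (1 + (finrank ℝ E : ℝ)⁻¹ * (rexp (θ * R ^ 2) - 1)) * opTrace (exp H) := by
  have hinner := integrable_of_continuous_of_ae_norm_eq (f := fun x => ⟪x, exp H x⟫_ℝ)
    (by fun_prop) h.ae_norm_eq
  calc ∫ x, opTrace (exp (H + θ • rankOne ℝ x x)) ∂μ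
      ≤ ∫ x, (opTrace (exp H) + (rexp (θ * R ^ 2) - 1) / R ^ 2 * ⟪x, exp H x⟫_ℝ) ∂μ := by
        refine integral_mono_ae
          (integrable_of_continuous_of_ae_norm_eq
            (continuous_opTrace_exp_add_smul_rankOne H θ) h.ae_norm_eq)
          ((integrable_const _).add (hinner.const_mul _)) (h.ae_norm_eq.mono fun x hx => ?_)
        simpa only [hx] using opTrace_exp_add_smul_rankOne_le hH θ x
    _ = opTrace (exp H) +
          (rexp (θ * R ^ 2) - 1) / R ^ 2 * (R ^ 2 / finrank ℝ E * opTrace (exp H)) := by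
        rw [integral_add (integrable_const _) (hinner.const_mul _), integral_const_mul,
          h.integral_inner_apply_self hH.exp]
        simp
    _ = (1 + (finrank ℝ E : ℝ)⁻¹ * (rexp (θ * R ^ 2) - 1)) * opTrace (exp H) := by
        rcases eq_or_ne R 0 with rfl | hR
        · simp
        · field_simp

end Isotropy

section Independence

variable {Ω : Type*} [MeasurableSpace Ω] {P : Measure Ω}

theorem lintegral_prodMk_eq_lintegral_lintegral_of_indepFun [IsFiniteMeasure P]
    {β γ : Type*} [MeasurableSpace β] [MeasurableSpace γ] {X : Ω → β} {Y : Ω → γ}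
    (h : IndepFun X Y P) (hX : AEMeasurable X P) (hY : AEMeasurable Y P)
    {f : β × γ → ENNReal} (hf : Measurable f) :
    ∫⁻ ω, f (X ω, Y ω) ∂P = ∫⁻ ω, ∫⁻ ω', f (X ω', Y ω) ∂P ∂P := by
  calc ∫⁻ ω, f (X ω, Y ω) ∂P = ∫⁻ z, f z ∂((P.map X).prod (P.map Y)) := by
        rw [← (indepFun_iff_map_prod_eq_prod_map_map hX hY).1 h,
          lintegral_map' hf.aemeasurable (hX.prodMk hY)]
    _ = ∫⁻ y, ∫⁻ x, f (x, y) ∂(P.map X) ∂(P.map Y) := lintegral_prod_symm' f hf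
    _ = ∫⁻ ω, ∫⁻ x, f (x, Y ω) ∂(P.map X) ∂P :=
        lintegral_map' hf.lintegral_prod_left'.aemeasurable hY
    _ = ∫⁻ ω, ∫⁻ ω', f (X ω', Y ω) ∂P ∂P := by
        refine lintegral_congr fun ω => lintegral_map' ?_ hX
        exact (hf.comp measurable_prodMk_right).aemeasurable

variable [FiniteDimensional ℝ E] {ι : Type*} {Z : ι → Ω → E →L[ℝ] E}

theorem continuous_ofReal_opTrace_exp_add (H : E →L[ℝ] E) :
    Continuous fun A => ENNReal.ofReal (opTrace (exp (H + A))) := by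
  have hexp := continuous_exp_clm (E := E)
  exact ENNReal.continuous_ofReal.comp (by fun_prop)

theorem lintegral_opTrace_exp_add_sum_le [IsProbabilityMeasure P] (hindep : iIndepFun Z P)
    (hmeas : ∀ i, AEMeasurable (Z i) P) (hself : ∀ i ω, IsSelfAdjoint (Z i ω)) {c : ℝ} (hc : 0 ≤ c)
    (hstep : ∀ i (H : E →L[ℝ] E), IsSelfAdjoint H →
      ∫⁻ ω, ENNReal.ofReal (opTrace (exp (H + Z i ω))) ∂P ≤ ENNReal.ofReal (c * opTrace (exp H)))
    {H : E →L[ℝ] E} (hH : IsSelfAdjoint H) (s : Finset ι) :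
    ∫⁻ ω, ENNReal.ofReal (opTrace (exp (H + ∑ i ∈ s, Z i ω))) ∂P ≤
      ENNReal.ofReal (c ^ s.card * opTrace (exp H)) := by
  classical
  induction s using Finset.induction_on with
  | empty => simp
  | insert i s hi ih =>
    have hind := (hindep.indepFun_finsetSum_of_notMem₀ hmeas hi).symm
    have hsum : AEMeasurable (∑ j ∈ s, Z j) P := Finset.aemeasurable_sum s fun j _ => hmeas j
    have hf : Measurable fun z : (E →L[ℝ] E) × (E →L[ℝ] E) =>
        ENNReal.ofReal (opTrace (exp (H + (z.1 + z.2)))) :=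
      (continuous_ofReal_opTrace_exp_add H).measurable.comp (measurable_fst.add measurable_snd)
    have hselfsum (ω : Ω) : IsSelfAdjoint (H + (∑ j ∈ s, Z j) ω) := by
      rw [Finset.sum_apply]
      exact hH.add (isSelfAdjoint_sum s fun j _ => hself j ω)
    calc ∫⁻ ω, ENNReal.ofReal (opTrace (exp (H + ∑ j ∈ insert i s, Z j ω))) ∂P
        = ∫⁻ ω, ENNReal.ofReal (opTrace (exp (H + (Z i ω + (∑ j ∈ s, Z j) ω)))) ∂P := by
          simp only [Finset.sum_insert hi, Finset.sum_apply]
      _ = ∫⁻ ω, ∫⁻ ω', ENNReal.ofReal (opTrace (exp (H + (Z i ω' + (∑ j ∈ s, Z j) ω)))) ∂P ∂P :=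
          lintegral_prodMk_eq_lintegral_lintegral_of_indepFun hind (hmeas i) hsum hf
      _ ≤ ∫⁻ ω, ENNReal.ofReal (c * opTrace (exp (H + (∑ j ∈ s, Z j) ω))) ∂P := by
          refine lintegral_mono fun ω => ?_
          simpa only [add_assoc, add_comm (Z i _)] using hstep i _ (hselfsum ω)
      _ = ENNReal.ofReal c * ∫⁻ ω, ENNReal.ofReal (opTrace (exp (H + ∑ j ∈ s, Z j ω))) ∂P := by
          simp only [ENNReal.ofReal_mul hc, Finset.sum_apply]
          exact lintegral_const_mul' _ _ ENNReal.ofReal_ne_top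
      _ ≤ ENNReal.ofReal c * ENNReal.ofReal (c ^ s.card * opTrace (exp H)) := by gcongr
      _ = ENNReal.ofReal (c ^ (insert i s).card * opTrace (exp H)) := by
          rw [← ENNReal.ofReal_mul hc, Finset.card_insert_of_notMem hi, pow_succ', mul_assoc]

end Independence

section Scalar

theorem exp_le_one_add_add_sq_div {y b : ℝ} (hy : |y| ≤ b) (hb : b < 3) :
    rexp y ≤ 1 + y + y ^ 2 / (2 * (1 - b / 3)) := by
  have hb0 : 0 ≤ b := (abs_nonneg y).trans hy
  have hexp : HasSum (fun k => y ^ (k + 2) / (k + 2).factorial) (rexp y - (1 + y)) := by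
    have := NormedSpace.expSeries_div_hasSum_exp y
    rw [← Real.exp_eq_exp_ℝ, ← hasSum_nat_add_iff' 2] at this
    simpa [Finset.sum_range_succ] using this
  have hgeom : HasSum (fun k => y ^ 2 / 2 * (b / 3) ^ k) (y ^ 2 / 2 * (1 - b / 3)⁻¹) :=
    (hasSum_geometric_of_lt_one (by positivity) (by linarith)).mul_left _
  have hterm (k : ℕ) : y ^ (k + 2) / (k + 2).factorial ≤ y ^ 2 / 2 * (b / 3) ^ k := by
    have hfact : (2 : ℝ) * 3 ^ k ≤ (k + 2).factorial := by
      exact_mod_cast add_comm 2 k ▸ Nat.factorial_mul_pow_le_factorial (m := 2) (n := k)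
    calc y ^ (k + 2) / (k + 2).factorial ≤ |y| ^ (k + 2) / (k + 2).factorial := by
          gcongr ?_ / _
          exact (le_abs_self _).trans_eq (abs_pow y _)
      _ ≤ |y| ^ (k + 2) / (2 * 3 ^ k) := by gcongr
      _ = y ^ 2 / 2 * (|y| / 3) ^ k := by rw [pow_add, sq_abs, div_pow]; field_simp
      _ ≤ y ^ 2 / 2 * (b / 3) ^ k := by gcongr
  have := hasSum_le hterm hexp hgeom
  rw [div_mul_eq_div_div, div_eq_mul_inv (y ^ 2 / 2)]
  linarith

-- The left side is `𝔼 exp (z * (ξ - p))` for a Bernoulli variable `ξ` with success probability `p`.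
theorem centered_bernoulli_mgf_le {p z b : ℝ} (hp0 : 0 ≤ p) (hp1 : p ≤ 1) (hpz : p * |z| ≤ b)
    (hqz : (1 - p) * |z| ≤ b) (hb : b < 3) :
    rexp (-(p * z)) * (1 + p * (rexp z - 1)) ≤
      rexp (p * (1 - p) * z ^ 2 / (2 * (1 - b / 3))) := by
  have hzero : rexp (-(p * z)) ≤ 1 + -(p * z) + (-(p * z)) ^ 2 / (2 * (1 - b / 3)) :=
    exp_le_one_add_add_sq_div (by rwa [abs_neg, abs_mul, abs_of_nonneg hp0]) hb
  have hone : rexp ((1 - p) * z) ≤ 1 + (1 - p) * z + ((1 - p) * z) ^ 2 / (2 * (1 - b / 3)) :=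
    exp_le_one_add_add_sq_div (by rwa [abs_mul, abs_of_nonneg (sub_nonneg.2 hp1)]) hb
  calc rexp (-(p * z)) * (1 + p * (rexp z - 1))
      = (1 - p) * rexp (-(p * z)) + p * rexp ((1 - p) * z) := by
        rw [show (1 - p) * z = -(p * z) + z by ring, Real.exp_add]; ring
    _ ≤ (1 - p) * (1 + -(p * z) + (-(p * z)) ^ 2 / (2 * (1 - b / 3))) +
          p * (1 + (1 - p) * z + ((1 - p) * z) ^ 2 / (2 * (1 - b / 3))) := by
        gcongr
    _ = p * (1 - p) * z ^ 2 / (2 * (1 - b / 3)) + 1 := by ring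
    _ ≤ rexp (p * (1 - p) * z ^ 2 / (2 * (1 - b / 3))) := add_one_le_exp _

theorem exp_neg_mul_pow_le {d θ : ℝ} {n : ℕ} (hd : 2 ≤ d) (hn : n ≠ 0)
    (hθ : |θ| * ((d - 1) / n) < 3) :
    rexp (-θ) * (1 + d⁻¹ * (rexp (θ * (d / n)) - 1)) ^ n ≤
      rexp (θ ^ 2 * ((d - 1) / n) / (2 * (1 - |θ| * ((d - 1) / n) / 3))) := by
  have hd0 : 0 < d := by linarith
  have hdinv : d⁻¹ ≤ 1 := inv_le_one_of_one_le₀ (by linarith)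
  set z := θ * (d / n) with hz
  have hz_abs : |z| = |θ| * (d / n) := by
    rw [hz, abs_mul, abs_of_nonneg (by positivity : 0 ≤ d / n)]
  have hq : (1 - d⁻¹) * |z| = |θ| * ((d - 1) / n) := by rw [hz_abs]; field_simp
  have hp : d⁻¹ * |z| ≤ |θ| * ((d - 1) / n) := by
    rw [← hq]
    gcongr
    linarith [inv_anti₀ two_pos hd]
  have hbern := centered_bernoulli_mgf_le (by positivity) hdinv hp hq.le hθ
  have hbase : 0 ≤ 1 + d⁻¹ * (rexp z - 1) := by
    nlinarith [mul_pos (inv_pos.2 hd0) (exp_pos z)]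
  calc rexp (-θ) * (1 + d⁻¹ * (rexp z - 1)) ^ n
      = (rexp (-(d⁻¹ * z)) * (1 + d⁻¹ * (rexp z - 1))) ^ n := by
        rw [mul_pow, ← Real.exp_nat_mul, hz]
        congr 2
        field_simp
    _ ≤ rexp (d⁻¹ * (1 - d⁻¹) * z ^ 2 / (2 * (1 - |θ| * ((d - 1) / n) / 3))) ^ n := by gcongr
    _ = rexp (θ ^ 2 * ((d - 1) / n) / (2 * (1 - |θ| * ((d - 1) / n) / 3))) := by
        rw [← Real.exp_nat_mul, mul_div_assoc', hz]
        congr 2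
        field_simp

theorem bernstein_exponent_eq {v ε θ : ℝ} (hv : 0 < v) (hε : 0 ≤ ε)
    (hθ : θ = ε / (v * (1 + ε / 3))) :
    θ ^ 2 * v / (2 * (1 - θ * v / 3)) - θ * ε = -(ε ^ 2 / (2 * v * (1 + ε / 3))) := by
  have hgap : 1 - θ * v / 3 = (1 + ε / 3)⁻¹ := by
    rw [hθ]; field_simp; ring
  rw [hgap, hθ]
  field_simp
  ring

end Scalar

section Concentration

variable [FiniteDimensional ℝ E] {Ω : Type*} [MeasurableSpace Ω] {P : Measure Ω}

theorem measure_le_opNorm_le_lintegral_opTrace_exp [Nontrivial E] {T : Ω → E →L[ℝ] E}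
    (hT : AEMeasurable T P) (hself : ∀ ω, IsSelfAdjoint (T ω)) {θ : ℝ} (hθ : 0 ≤ θ) (ε : ℝ) :
    P {ω | ε ≤ ‖T ω‖} ≤ (∫⁻ ω, ENNReal.ofReal (opTrace (exp (θ • T ω))) ∂P +
      ∫⁻ ω, ENNReal.ofReal (opTrace (exp ((-θ) • T ω))) ∂P) / ENNReal.ofReal (rexp (θ * ε)) := by
  have hmeas (c : ℝ) : AEMeasurable (fun ω => ENNReal.ofReal (opTrace (exp (c • T ω)))) P := by
    have := (continuous_ofReal_opTrace_exp_add (E := E) 0).measurable.comp_aemeasurable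
      (hT.const_smul c)
    simpa [Function.comp_def] using this
  rw [← lintegral_add_left' (hmeas θ)]
  refine le_trans (measure_mono fun ω hω => ?_) (meas_ge_le_lintegral_div
    ((hmeas θ).add (hmeas (-θ))) (ENNReal.ofReal_pos.2 (exp_pos _)).ne' ENNReal.ofReal_ne_top)
  have hpos (c : ℝ) := opTrace_exp_nonneg ((IsSelfAdjoint.all c).smul (hself ω))
  simp only [Set.mem_ofPred_eq, Pi.add_apply, ← ENNReal.ofReal_add (hpos θ) (hpos (-θ))] at hω ⊢
  refine ENNReal.ofReal_le_ofReal (le_trans ?_ (exp_mul_opNorm_le (hself ω) θ))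
  gcongr

theorem opTrace_exp_smul_one (c : ℝ) :
    opTrace (exp (c • (1 : E →L[ℝ] E))) = finrank ℝ E * rexp c := by
  have (v : E) : exp (c • (1 : E →L[ℝ] E)) v = rexp c • v := exp_apply_of_apply_eq_smul rfl
  rw [opTrace_eq_sum_inner (stdOrthonormalBasis ℝ E)]
  simp [this, real_inner_smul_right]

variable [MeasurableSpace E] [BorelSpace E] [IsProbabilityMeasure P] {ι : Type*}
  {X : ι → Ω → E} {R : ℝ}

theorem lintegral_opTrace_exp_add_sum_smul_rankOne_le (hindep : iIndepFun X P)
    (hX : ∀ i, AEMeasurable (X i) P) (hiso : ∀ i, IsIsotropicOnSphere (P.map (X i)) R)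
    {H : E →L[ℝ] E} (hH : IsSelfAdjoint H) (θ : ℝ) (s : Finset ι) :
    ∫⁻ ω, ENNReal.ofReal (opTrace (exp (H + ∑ i ∈ s, θ • rankOne ℝ (X i ω) (X i ω)))) ∂P ≤
      ENNReal.ofReal ((1 + (finrank ℝ E : ℝ)⁻¹ * (rexp (θ * R ^ 2) - 1)) ^ s.card *
        opTrace (exp H)) := by
  have hmeas : Measurable fun x : E => θ • rankOne ℝ x x :=
    continuous_rankOne_self.measurable.const_smul θ
  have hself (x : E) : IsSelfAdjoint (θ • rankOne ℝ x x) :=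
    (IsSelfAdjoint.all θ).smul (isPositive_rankOne_self x).isSelfAdjoint
  have hc : 0 ≤ 1 + (finrank ℝ E : ℝ)⁻¹ * (rexp (θ * R ^ 2) - 1) := by
    have hinv := Nat.cast_inv_le_one (α := ℝ) (finrank ℝ E)
    have hinv0 : (0 : ℝ) ≤ (finrank ℝ E : ℝ)⁻¹ := by positivity
    nlinarith [exp_pos (θ * R ^ 2)]
  refine lintegral_opTrace_exp_add_sum_le
    (hindep.comp (fun _ x => θ • rankOne ℝ x x) fun _ => hmeas)
    (fun i => hmeas.comp_aemeasurable (hX i)) (fun i ω => hself (X i ω)) hc (fun i K hK => ?_) hH s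
  have := Measure.isProbabilityMeasure_map (hX i)
  have hcont := continuous_opTrace_exp_add_smul_rankOne K θ
  calc ∫⁻ ω, ENNReal.ofReal (opTrace (exp (K + θ • rankOne ℝ (X i ω) (X i ω)))) ∂P
      = ∫⁻ x, ENNReal.ofReal (opTrace (exp (K + θ • rankOne ℝ x x))) ∂(P.map (X i)) :=
        (lintegral_map' hcont.measurable.ennreal_ofReal.aemeasurable (hX i)).symm
    _ = ENNReal.ofReal (∫ x, opTrace (exp (K + θ • rankOne ℝ x x)) ∂(P.map (X i))) :=
        (ofReal_integral_eq_lintegral_ofReal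
          (integrable_of_continuous_of_ae_norm_eq hcont (hiso i).ae_norm_eq)
          (.of_forall fun x => opTrace_exp_nonneg (hK.add (hself x)))).symm
    _ ≤ _ :=
        ENNReal.ofReal_le_ofReal ((hiso i).integral_opTrace_exp_add_smul_rankOne_le hK θ)

variable [Fintype ι] [Nonempty ι]

theorem lintegral_opTrace_exp_smul_sum_rankOne_sub_one_le (hindep : iIndepFun X P)
    (hX : ∀ i, AEMeasurable (X i) P)
    (hiso : ∀ i, IsIsotropicOnSphere (P.map (X i)) √(finrank ℝ E / Fintype.card ι))
    (hd : 2 ≤ finrank ℝ E) {θ : ℝ} (hθ : |θ| * ((finrank ℝ E - 1) / Fintype.card ι) < 3) :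
    ∫⁻ ω, ENNReal.ofReal (opTrace (exp (θ • (∑ i, rankOne ℝ (X i ω) (X i ω) - 1)))) ∂P ≤
      ENNReal.ofReal (finrank ℝ E * rexp (θ ^ 2 * ((finrank ℝ E - 1) / Fintype.card ι) /
        (2 * (1 - |θ| * ((finrank ℝ E - 1) / Fintype.card ι) / 3)))) := by
  set n := Fintype.card ι
  have hd2 : (2 : ℝ) ≤ finrank ℝ E := by exact_mod_cast hd
  have hH : IsSelfAdjoint ((-θ) • (1 : E →L[ℝ] E)) := (IsSelfAdjoint.all _).smul (.one _)
  have hlaplace := lintegral_opTrace_exp_add_sum_smul_rankOne_le hindep hX hiso hH θ Finset.univ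
  rw [Real.sq_sqrt (by positivity), opTrace_exp_smul_one, mul_left_comm, mul_comm _ (rexp (-θ))]
    at hlaplace
  calc ∫⁻ ω, ENNReal.ofReal (opTrace (exp (θ • (∑ i, rankOne ℝ (X i ω) (X i ω) - 1)))) ∂P
      = ∫⁻ ω, ENNReal.ofReal
          (opTrace (exp ((-θ) • 1 + ∑ i, θ • rankOne ℝ (X i ω) (X i ω)))) ∂P := by
        simp only [smul_sub, Finset.smul_sum, neg_smul, neg_add_eq_sub]
    _ ≤ _ := hlaplace
    _ ≤ _ := by
        gcongr
        exact exp_neg_mul_pow_le hd2 Fintype.card_ne_zero hθ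

theorem measure_le_opNorm_sum_rankOne_sub_one_le (hindep : iIndepFun X P)
    (hX : ∀ i, AEMeasurable (X i) P)
    (hiso : ∀ i, IsIsotropicOnSphere (P.map (X i)) √(finrank ℝ E / Fintype.card ι))
    (hd : 2 ≤ finrank ℝ E) {θ : ℝ} (hθ : 0 ≤ θ)
    (hθ3 : θ * ((finrank ℝ E - 1) / Fintype.card ι) < 3) (ε : ℝ) :
    P {ω | ε ≤ ‖∑ i, rankOne ℝ (X i ω) (X i ω) - 1‖} ≤
      ENNReal.ofReal (2 * finrank ℝ E * rexp (θ ^ 2 * ((finrank ℝ E - 1) / Fintype.card ι) /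
        (2 * (1 - θ * ((finrank ℝ E - 1) / Fintype.card ι) / 3)) - θ * ε)) := by
  have : Nontrivial E := nontrivial_of_finrank_pos (R := ℝ) (by lia)
  have hmeas : AEMeasurable (fun ω => ∑ i, rankOne ℝ (X i ω) (X i ω) - (1 : E →L[ℝ] E)) P :=
    (Finset.aemeasurable_fun_sum _ fun i _ =>
      continuous_rankOne_self.measurable.comp_aemeasurable (hX i)).sub_const 1
  have hself (ω : Ω) : IsSelfAdjoint (∑ i, rankOne ℝ (X i ω) (X i ω) - (1 : E →L[ℝ] E)) :=
    (isSelfAdjoint_sum _ fun i _ => (isPositive_rankOne_self (X i ω)).isSelfAdjoint).sub (.one _)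
  have hpos := lintegral_opTrace_exp_smul_sum_rankOne_sub_one_le hindep hX hiso hd
    (by rwa [abs_of_nonneg hθ])
  have hneg := lintegral_opTrace_exp_smul_sum_rankOne_sub_one_le hindep hX hiso hd
    (θ := -θ) (by rwa [abs_neg, abs_of_nonneg hθ])
  rw [neg_sq, abs_neg] at hneg
  rw [abs_of_nonneg hθ] at hpos hneg
  refine (measure_le_opNorm_le_lintegral_opTrace_exp hmeas hself hθ ε).trans
    ((ENNReal.div_le_div_right (add_le_add hpos hneg) _).trans_eq ?_)
  rw [← ENNReal.ofReal_add (by positivity) (by positivity),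
    ← ENNReal.ofReal_div_of_pos (exp_pos _), ← two_mul, ← mul_assoc, mul_div_assoc, ← Real.exp_sub]

theorem sphere_concentration_opNorm_general (hindep : iIndepFun X P)
    (hX : ∀ i, AEMeasurable (X i) P)
    (hiso : ∀ i, IsIsotropicOnSphere (P.map (X i)) √(finrank ℝ E / Fintype.card ι))
    (hd : 2 ≤ finrank ℝ E) {ε : ℝ} (hε : 0 ≤ ε) :
    P {ω | ε ≤ ‖∑ i, rankOne ℝ (X i ω) (X i ω) - 1‖} ≤
      ENNReal.ofReal (2 * finrank ℝ E * rexp (-(Fintype.card ι * ε ^ 2) /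
        (2 * finrank ℝ E - 2 + 2 * ε * (finrank ℝ E - 1) / 3))) := by
  have hd1 : (0 : ℝ) < finrank ℝ E - 1 := by
    rw [sub_pos]; exact_mod_cast hd
  set v : ℝ := (finrank ℝ E - 1) / Fintype.card ι with hv_def
  have hv : 0 < v := by positivity
  set θ : ℝ := ε / (v * (1 + ε / 3)) with hθ_def
  have hθ3 : θ * v < 3 := by
    rw [hθ_def, div_mul_eq_mul_div, mul_comm v, mul_div_mul_right _ _ hv.ne',
      div_lt_iff₀ (by positivity)]
    linarith
  have htail := measure_le_opNorm_sum_rankOne_sub_one_le hindep hX hiso hd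
    (by positivity : 0 ≤ θ) hθ3 ε
  rw [bernstein_exponent_eq hv hε hθ_def, hv_def] at htail
  convert htail using 4
  field_simp

end Concentration

theorem frameOperator_eq_sum_rankOne {d n : ℕ} (x : Fin n → EuclideanSpace ℝ (Fin d)) :
    frameOperator x = ∑ i, rankOne ℝ (x i) (x i) :=
  rfl

/-- **Concentration over the sphere, operator norm.**
If `x₁, …, xₙ` are i.i.d. uniform on the sphere of radius `√(d/n)` in `ℝ^d` (their joint law
being the `n`-fold product of the uniform probability measure `μ` on that sphere, where `μ`
is characterized as a rotation-invariant probability measure supported on the sphere), then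
for every `ε ≥ 0`,
`ℙ(‖S - I‖_op ≥ ε) ≤ 2d · exp(-nε² / (2d - 2 + 2ε(d-1)/3))`. -/
theorem sphere_concentration_opNorm
    (d n : ℕ) (hd : 2 ≤ d) (hn : 0 < n)
    (μ : Measure (EuclideanSpace ℝ (Fin d))) [IsProbabilityMeasure μ]
    (hsupp : μ (Metric.sphere (0 : EuclideanSpace ℝ (Fin d)) (Real.sqrt (d / n))) = 1)
    (hinv : ∀ Q : EuclideanSpace ℝ (Fin d) ≃ₗᵢ[ℝ] EuclideanSpace ℝ (Fin d),
      Measure.map (⇑Q) μ = μ)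
    (ε : ℝ) (hε : 0 ≤ ε) :
    (Measure.pi fun _ : Fin n => μ)
        {x | ε ≤ ‖frameOperator x - 1‖}
      ≤ ENNReal.ofReal
          (2 * d * Real.exp (-(n * ε ^ 2) / (2 * d - 2 + 2 * ε * (d - 1) / 3))) := by
  have hiso (i : Fin n) :
      IsIsotropicOnSphere ((Measure.pi fun _ : Fin n => μ).map (· i)) √(d / n) := by
    rw [(measurePreserving_eval (fun _ : Fin n => μ) i).map_eq]
    exact isIsotropicOnSphere_of_map_eq hsupp hinv
  have : Nonempty (Fin n) := ⟨⟨0, hn⟩⟩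
  have hgeneral := sphere_concentration_opNorm_general
    (X := fun (i : Fin n) (x : Fin n → EuclideanSpace ℝ (Fin d)) => x i)
    (iIndepFun_pi (X := fun _ => id) fun _ => aemeasurable_id)
    (fun i => (measurable_pi_apply i).aemeasurable)
    (by simpa only [finrank_euclideanSpace_fin, Fintype.card_fin] using hiso)
    (by rwa [finrank_euclideanSpace_fin]) hε
  simpa only [frameOperator_eq_sum_rankOne, finrank_euclideanSpace_fin, Fintype.card_fin]
    using hgeneral
end
end

section
/- There exists an absolute constant c > 0 such that for all integers d ≥ 2 and n ≥ 1 the following holds: if (x_i)_{i=1}^n are independent random vectors each drawn from the uniform probability measure on the closed Euclidean ball of radius sqrt((d+2)/n) in ℝ^d, and S = Σ_{i=1}^n x_i x_i^* is the associated frame operator, then for every ε ≥ 0, the probability that ‖S − I_d‖_F ≥ ε is at most d² · exp( − c n ε² / d³ ). -/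
open MeasureTheory ProbabilityTheory Real

noncomputable section

/-- The Frobenius (Hilbert–Schmidt) norm of `S - I_d`, where
`S = ∑ i, x_i x_i^*` is the frame operator of the family `x`; entrywise,
`S j k = ∑ i, x i j * x i k`. -/
def frobNormFrameOpSubId {d n : ℕ} (x : Fin n → EuclideanSpace ℝ (Fin d)) : ℝ :=
  Real.sqrt (∑ j : Fin d, ∑ k : Fin d,
    ((∑ i : Fin n, x i j * x i k) - (if j = k then (1 : ℝ) else 0)) ^ 2)

open Finset Metric Module
open scoped RealInnerProductSpace

/-!
In the Hilbert space of `d × d` matrices with the Frobenius norm, `S - I = ∑ i, (x_i x_iᵀ - I / n)`.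
Coordinate reflections and transpositions, together with polar coordinates for `∫ ‖x‖²`, show that
the summands are centred, and their squared norm is at most `d (d + 3) / n²`.

For independent centred vectors with `‖X_i‖ ≤ b_i` in a Hilbert space there is a dimension-free
Hoeffding inequality. Since `u ↦ cosh √u` has nonnegative Taylor coefficients, it is convex on
`[0, ∞)`; as `‖s + x‖²` depends linearly on `⟪s, x⟫`, the chord of this function bounds
`cosh ‖s + x‖` by `cosh ‖s‖ cosh b` plus a term linear in `x`, which has mean zero. Hence
`E cosh (t ‖∑ X_i‖) ≤ ∏ cosh (t b_i) ≤ exp (t² ∑ b_i² / 2)`, and Markov's inequality with the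
optimal `t` yields `ℙ(ε ≤ ‖∑ X_i‖) ≤ 2 exp (-ε² / (2 ∑ b_i²))`.
-/

section HyperbolicCosine

lemma hasSum_cosh_sqrt {u : ℝ} (hu : 0 ≤ u) :
    HasSum (fun n : ℕ => u ^ n / ((2 * n).factorial : ℝ)) (cosh √u) := by
  simpa [pow_mul, sq_sqrt hu] using hasSum_cosh √u

lemma convexOn_cosh_sqrt : ConvexOn ℝ (Set.Ici 0) fun u => cosh √u := by
  refine ⟨convex_Ici 0, fun u hu v hv a b ha hb hab => ?_⟩
  refine hasSum_le (fun n => ?_) (hasSum_cosh_sqrt (convex_Ici 0 hu hv ha hb hab))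
    (((hasSum_cosh_sqrt hu).mul_left a).add ((hasSum_cosh_sqrt hv).mul_left b))
  have hpow := (convexOn_pow (𝕜 := ℝ) n).2 hu hv ha hb hab
  rw [← mul_div_assoc, ← mul_div_assoc, ← add_div]
  gcongr
  exact hpow

lemma cosh_sqrt_sq_add_sq_add_le (p q : ℝ) {r : ℝ} (hr : |r| ≤ 1) :
    cosh √(p ^ 2 + q ^ 2 + 2 * (r * (p * q))) ≤ cosh p * cosh q + r * (sinh p * sinh q) := by
  obtain ⟨hr_ge, hr_le⟩ := abs_le.1 hr
  have hchord := convexOn_cosh_sqrt.2 (Set.mem_Ici.2 (sq_nonneg (p + q)))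
    (Set.mem_Ici.2 (sq_nonneg (p - q))) (by linarith : 0 ≤ (1 + r) / 2)
    (by linarith : 0 ≤ (1 - r) / 2) (by ring)
  simp only [smul_eq_mul, sqrt_sq_eq_abs, cosh_abs, cosh_add, cosh_sub] at hchord
  calc cosh √(p ^ 2 + q ^ 2 + 2 * (r * (p * q)))
      = cosh √((1 + r) / 2 * (p + q) ^ 2 + (1 - r) / 2 * (p - q) ^ 2) := by ring_nf
    _ ≤ _ := hchord
    _ = cosh p * cosh q + r * (sinh p * sinh q) := by ring

variable {H : Type*} [NormedAddCommGroup H]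

lemma cosh_norm_add_le_mul_exp (s : H) {x : H} {b : ℝ} (hx : ‖x‖ ≤ b) :
    cosh ‖s + x‖ ≤ cosh ‖s‖ * exp b := by
  have hb : 0 ≤ b := (norm_nonneg x).trans hx
  calc cosh ‖s + x‖ ≤ cosh (‖s‖ + b) := by
        rw [cosh_le_cosh, abs_of_nonneg (norm_nonneg _), abs_of_nonneg (by positivity)]
        exact (norm_add_le s x).trans (by gcongr)
    _ = cosh ‖s‖ * cosh b + sinh ‖s‖ * sinh b := cosh_add _ _
    _ ≤ cosh ‖s‖ * cosh b + cosh ‖s‖ * sinh b := by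
        gcongr
        exact (sinh_lt_cosh _).le
    _ = cosh ‖s‖ * exp b := by rw [← mul_add, cosh_add_sinh]

variable [InnerProductSpace ℝ H]

/-- The gradient of `s ↦ cosh ‖s‖`, the linear term in the exponential-moment recursion. At `s = 0`
the quotient is `0 / 0 = 0`, which gives the correct value `0`. -/
def gradCoshNorm (s : H) : H := (sinh ‖s‖ / ‖s‖) • s

lemma norm_gradCoshNorm (s : H) : ‖gradCoshNorm s‖ = sinh ‖s‖ := by
  rw [gradCoshNorm, norm_smul, norm_of_nonneg (by positivity)]
  exact div_mul_cancel_of_imp fun hs => by simp [hs]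

lemma measurable_gradCoshNorm [MeasurableSpace H] [BorelSpace H] [SecondCountableTopology H] :
    Measurable (gradCoshNorm : H → H) := by
  unfold gradCoshNorm
  fun_prop

lemma cosh_norm_add_le (s : H) {x : H} {b : ℝ} (hx : ‖x‖ ≤ b) :
    cosh ‖s + x‖ ≤ cosh ‖s‖ * cosh b + sinh b / b * ⟪gradCoshNorm s, x⟫ := by
  have hb : 0 ≤ b := (norm_nonneg x).trans hx
  have hinner : |⟪s, x⟫| ≤ ‖s‖ * b := (abs_real_inner_le_norm s x).trans (by gcongr)
  set r := ⟪s, x⟫ / (‖s‖ * b)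
  have hr : |r| ≤ 1 := by
    rw [abs_div, abs_of_nonneg (by positivity : 0 ≤ ‖s‖ * b)]
    exact div_le_one_of_le₀ hinner (by positivity)
  have hr_mul : r * (‖s‖ * b) = ⟪s, x⟫ :=
    div_mul_cancel_of_imp fun h => abs_nonpos_iff.1 (hinner.trans_eq h)
  have hnorm : ‖s + x‖ ≤ √(‖s‖ ^ 2 + b ^ 2 + 2 * (r * (‖s‖ * b))) := by
    apply le_sqrt_of_sq_le
    rw [norm_add_sq_real, hr_mul]
    linarith [pow_le_pow_left₀ (norm_nonneg x) hx 2]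
  calc cosh ‖s + x‖ ≤ cosh √(‖s‖ ^ 2 + b ^ 2 + 2 * (r * (‖s‖ * b))) := by
        rwa [cosh_le_cosh, abs_of_nonneg (norm_nonneg _), abs_of_nonneg (sqrt_nonneg _)]
    _ ≤ cosh ‖s‖ * cosh b + r * (sinh ‖s‖ * sinh b) := cosh_sqrt_sq_add_sq_add_le _ _ hr
    _ = cosh ‖s‖ * cosh b + sinh b / b * ⟪gradCoshNorm s, x⟫ := by
        rw [gradCoshNorm, real_inner_smul_left]
        ring

end HyperbolicCosine

section HilbertHoeffding

variable {Ω H : Type*} {mΩ : MeasurableSpace Ω} {P : Measure Ω} [NormedAddCommGroup H]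
  [MeasurableSpace H] [BorelSpace H] [SecondCountableTopology H]

lemma integrable_cosh_norm_add {S X : Ω → H} {b : ℝ} (hX : AEMeasurable X P)
    (hS : AEMeasurable S P) (hSint : Integrable (fun ω => cosh ‖S ω‖) P)
    (hXb : ∀ᵐ ω ∂P, ‖X ω‖ ≤ b) : Integrable (fun ω => cosh ‖S ω + X ω‖) P := by
  refine (hSint.mul_const (exp b)).mono' (by fun_prop) ?_
  filter_upwards [hXb] with ω hω
  rw [norm_of_nonneg (cosh_pos _).le]
  exact cosh_norm_add_le_mul_exp _ hω

variable [IsProbabilityMeasure P] {ι : Type*} {X : ι → Ω → H} {b : ι → ℝ}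

lemma integrable_cosh_norm_sum (hX : ∀ i, AEMeasurable (X i) P)
    (hXb : ∀ i, ∀ᵐ ω ∂P, ‖X i ω‖ ≤ b i) (s : Finset ι) :
    Integrable (fun ω => cosh ‖∑ i ∈ s, X i ω‖) P := by
  classical
  induction s using Finset.induction_on with
  | empty => simp
  | insert i s hi ih =>
    simp_rw [sum_insert hi, add_comm (X i _)]
    exact integrable_cosh_norm_add (hX i) (by fun_prop) ih (hXb i)

variable [InnerProductSpace ℝ H] [CompleteSpace H]

-- The term linear in `X` in `cosh_norm_add_le` integrates to zero by independence.
lemma integral_cosh_norm_add_le_of_indepFun {S X : Ω → H} {b : ℝ} (hSX : IndepFun S X P)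
    (hX : AEMeasurable X P) (hS : AEMeasurable S P) (hSint : Integrable (fun ω => cosh ‖S ω‖) P)
    (hXb : ∀ᵐ ω ∂P, ‖X ω‖ ≤ b) (hX0 : P[X] = 0) :
    P[fun ω => cosh ‖S ω + X ω‖] ≤ P[fun ω => cosh ‖S ω‖] * cosh b := by
  have hgrad : Integrable (fun ω => gradCoshNorm (S ω)) P := by
    refine hSint.mono' (measurable_gradCoshNorm.comp_aemeasurable hS).aestronglyMeasurable ?_
    filter_upwards with ω
    rw [norm_gradCoshNorm]
    exact (sinh_lt_cosh _).le
  have hXint : Integrable X P := .of_bound hX.aestronglyMeasurable b hXb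
  have hindep : IndepFun (fun ω => gradCoshNorm (S ω)) X P :=
    hSX.comp measurable_gradCoshNorm measurable_id
  have hlin_int : Integrable (fun ω => ⟪gradCoshNorm (S ω), X ω⟫) P :=
    hindep.integrable_bilin hgrad hXint (innerSL ℝ)
  have hlin : ∫ ω, ⟪gradCoshNorm (S ω), X ω⟫ ∂P = 0 := by
    have := hindep.integral_bilin hgrad hXint (innerSL ℝ)
    rwa [hX0, map_zero] at this
  calc P[fun ω => cosh ‖S ω + X ω‖]
      ≤ ∫ ω, (cosh ‖S ω‖ * cosh b + sinh b / b * ⟪gradCoshNorm (S ω), X ω⟫) ∂P := by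
        refine integral_mono_ae (integrable_cosh_norm_add hX hS hSint hXb)
          ((hSint.mul_const _).add (hlin_int.const_mul _)) ?_
        filter_upwards [hXb] with ω hω using cosh_norm_add_le _ hω
    _ = P[fun ω => cosh ‖S ω‖] * cosh b := by
        rw [integral_add (hSint.mul_const _) (hlin_int.const_mul _), integral_mul_const,
          integral_const_mul, hlin, mul_zero, add_zero]

lemma integral_cosh_norm_sum_le_of_iIndepFun (hindep : iIndepFun X P)
    (hX : ∀ i, AEMeasurable (X i) P) (hXb : ∀ i, ∀ᵐ ω ∂P, ‖X i ω‖ ≤ b i)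
    (hX0 : ∀ i, P[X i] = 0) (s : Finset ι) :
    P[fun ω => cosh ‖∑ i ∈ s, X i ω‖] ≤ ∏ i ∈ s, cosh (b i) := by
  classical
  induction s using Finset.induction_on with
  | empty => simp
  | insert i s hi ih =>
    have hsum_indep : IndepFun (fun ω => ∑ j ∈ s, X j ω) (X i) P := by
      simpa only [Finset.sum_fn] using hindep.indepFun_finsetSum_of_notMem₀ hX hi
    calc P[fun ω => cosh ‖∑ j ∈ insert i s, X j ω‖]
        = P[fun ω => cosh ‖∑ j ∈ s, X j ω + X i ω‖] := by
          simp_rw [sum_insert hi, add_comm (X i _)]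
      _ ≤ P[fun ω => cosh ‖∑ j ∈ s, X j ω‖] * cosh (b i) :=
          integral_cosh_norm_add_le_of_indepFun hsum_indep (hX i) (by fun_prop)
            (integrable_cosh_norm_sum hX hXb s) (hXb i) (hX0 i)
      _ ≤ (∏ j ∈ s, cosh (b j)) * cosh (b i) := by
          gcongr
      _ = ∏ j ∈ insert i s, cosh (b j) := by rw [prod_insert hi, mul_comm]

lemma measureReal_norm_sum_ge_le_two_mul_exp_sub (hindep : iIndepFun X P)
    (hX : ∀ i, AEMeasurable (X i) P) (hXb : ∀ i, ∀ᵐ ω ∂P, ‖X i ω‖ ≤ b i)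
    (hX0 : ∀ i, P[X i] = 0) (s : Finset ι) (ε : ℝ) :
    P.real {ω | ε ≤ ‖∑ i ∈ s, X i ω‖} ≤ 2 * exp ((∑ i ∈ s, b i ^ 2) / 2 - ε) := by
  have hcosh {y : ℝ} (hy : ε ≤ y) : exp ε / 2 ≤ cosh y := by
    rw [cosh_eq]
    linarith [exp_le_exp.2 hy, exp_pos (-y)]
  have hmarkov : exp ε / 2 * P.real {ω | ε ≤ ‖∑ i ∈ s, X i ω‖} ≤ exp ((∑ i ∈ s, b i ^ 2) / 2) :=
    calc exp ε / 2 * P.real {ω | ε ≤ ‖∑ i ∈ s, X i ω‖}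
        ≤ exp ε / 2 * P.real {ω | exp ε / 2 ≤ cosh ‖∑ i ∈ s, X i ω‖} := by
          gcongr ?_ * ?_
          exact measureReal_mono fun ω => hcosh
      _ ≤ P[fun ω => cosh ‖∑ i ∈ s, X i ω‖] :=
          mul_meas_ge_le_integral_of_nonneg (.of_forall fun ω => (cosh_pos _).le)
            (integrable_cosh_norm_sum hX hXb s) _
      _ ≤ ∏ i ∈ s, cosh (b i) := integral_cosh_norm_sum_le_of_iIndepFun hindep hX hXb hX0 s
      _ ≤ ∏ i ∈ s, exp (b i ^ 2 / 2) :=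
          prod_le_prod (fun i _ => (cosh_pos _).le) fun i _ => cosh_le_exp_half_sq _
      _ = exp ((∑ i ∈ s, b i ^ 2) / 2) := by rw [← exp_sum, sum_div]
  rw [exp_sub, mul_div_assoc', le_div_iff₀ (exp_pos ε)]
  linarith

theorem measureReal_norm_sum_ge_le_of_iIndepFun (hindep : iIndepFun X P)
    (hX : ∀ i, AEMeasurable (X i) P) (hXb : ∀ i, ∀ᵐ ω ∂P, ‖X i ω‖ ≤ b i)
    (hX0 : ∀ i, P[X i] = 0) (s : Finset ι) {ε : ℝ} (hε : 0 ≤ ε) :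
    P.real {ω | ε ≤ ‖∑ i ∈ s, X i ω‖} ≤ 2 * exp (-ε ^ 2 / (2 * ∑ i ∈ s, b i ^ 2)) := by
  have hV : 0 ≤ ∑ i ∈ s, b i ^ 2 := by positivity
  set V := ∑ i ∈ s, b i ^ 2 with hV_def
  rcases (div_nonneg hε hV).eq_or_lt with ht | ht
  · have hexponent : -ε ^ 2 / (2 * V) = 0 := by
      rcases div_eq_zero_iff.1 ht.symm with h | h <;> simp [h]
    rw [hexponent, exp_zero, mul_one]
    exact measureReal_le_one.trans one_le_two
  -- `t = ε / V` minimises the exponent `t² V / 2 - t ε` obtained from the variables `t • X i`.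
  set t := ε / V
  have htXb (i : ι) : ∀ᵐ ω ∂P, ‖t • X i ω‖ ≤ t * b i := by
    filter_upwards [hXb i] with ω hω
    rw [norm_smul, norm_of_nonneg ht.le]
    gcongr
  have hscaled := measureReal_norm_sum_ge_le_two_mul_exp_sub
    (hindep.comp (fun _ => (t • ·)) fun _ => measurable_const_smul t)
    (fun i => (hX i).const_smul t) htXb (fun i => by simp [integral_smul, hX0]) s (t * ε)
  have hV_ne : V ≠ 0 := fun h => ht.ne' (by simp [t, h])
  have hexponent : (∑ i ∈ s, (t * b i) ^ 2) / 2 - t * ε = -ε ^ 2 / (2 * V) := by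
    simp_rw [mul_pow, ← mul_sum, ← hV_def, t]
    field_simp
    ring
  simpa only [Function.comp_apply, ← smul_sum, norm_smul, norm_of_nonneg ht.le,
    mul_le_mul_iff_right₀ ht, hexponent] using hscaled

end HilbertHoeffding

section UniformBall

variable {E : Type*} [NormedAddCommGroup E]

lemma setIntegral_closedBall_norm_pow [NormedSpace ℝ E] [FiniteDimensional ℝ E] [Nontrivial E]
    [MeasurableSpace E] [BorelSpace E] (μ : Measure E) [μ.IsAddHaarMeasure] (p : ℕ) {R : ℝ}
    (hR : 0 ≤ R) :
    ∫ x in closedBall (0 : E) R, ‖x‖ ^ p ∂μ =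
      finrank ℝ E / (finrank ℝ E + p) * R ^ p * μ.real (closedBall 0 R) := by
  have hdim : finrank ℝ E - 1 + 1 = finrank ℝ E := Nat.sub_add_cancel finrank_pos
  have hradial : ∫ y in Set.Ioi (0 : ℝ), y ^ (finrank ℝ E - 1) • (Set.Iic R).indicator (· ^ p) y =
      R ^ (finrank ℝ E + p) / (finrank ℝ E + p) := by
    have hcast : ((finrank ℝ E - 1 + p : ℕ) : ℝ) + 1 = finrank ℝ E + p := by
      rw [← hdim]
      push_cast
      ring
    simp_rw [smul_eq_mul,
      ← Set.indicator_mul_right (Set.Iic R) (fun y : ℝ => y ^ (finrank ℝ E - 1)), ← pow_add]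
    rw [setIntegral_indicator measurableSet_Iic, Set.Ioi_inter_Iic,
      ← intervalIntegral.integral_of_le hR, integral_pow, hcast, zero_pow (by omega), sub_zero,
      add_right_comm, hdim]
  calc ∫ x in closedBall (0 : E) R, ‖x‖ ^ p ∂μ
      = ∫ x, (Set.Iic R).indicator (· ^ p) ‖x‖ ∂μ := by
        rw [← integral_indicator isClosed_closedBall.measurableSet]
        congr with x
        by_cases hx : ‖x‖ ≤ R <;> simp [hx]
    _ = _ := by
        rw [integral_fun_norm_addHaar, hradial, Measure.addHaar_real_closedBall _ _ hR,
          nsmul_eq_mul, smul_eq_mul]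
        ring

lemma setIntegral_closedBall_comp_linearIsometryEquiv [InnerProductSpace ℝ E]
    [FiniteDimensional ℝ E] [MeasurableSpace E] [BorelSpace E] {F : Type*} [NormedAddCommGroup F]
    [NormedSpace ℝ F] (T : E ≃ₗᵢ[ℝ] E) (R : ℝ) (f : E → F) :
    ∫ x in closedBall (0 : E) R, f (T x) = ∫ x in closedBall (0 : E) R, f x := by
  simpa using T.measurePreserving.setIntegral_preimage_emb
    T.toMeasurableEquiv.measurableEmbedding f (closedBall 0 R)

variable {ι : Type*} [Fintype ι]

lemma integrableOn_closedBall_coord_mul_coord (R : ℝ) (j k : ι) :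
    IntegrableOn (fun x : EuclideanSpace ℝ ι => x j * x k) (closedBall 0 R) :=
  ContinuousOn.integrableOn_compact (isCompact_closedBall 0 R) (by fun_prop)

lemma setIntegral_closedBall_coord_mul_coord_of_ne (R : ℝ) {j k : ι} (hjk : j ≠ k) :
    ∫ x in closedBall (0 : EuclideanSpace ℝ ι) R, x j * x k = 0 := by
  classical
  let flip : EuclideanSpace ℝ ι ≃ₗᵢ[ℝ] EuclideanSpace ℝ ι :=
    LinearIsometryEquiv.piLpCongrRight 2 fun i =>
      if i = j then LinearIsometryEquiv.neg ℝ else LinearIsometryEquiv.refl ℝ ℝ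
  have hflip (x : EuclideanSpace ℝ ι) : flip x j * flip x k = -(x j * x k) := by
    simp [flip, hjk.symm, LinearIsometryEquiv.piLpCongrRight_apply]
  have hinv := setIntegral_closedBall_comp_linearIsometryEquiv flip R fun x => x j * x k
  simp_rw [hflip, integral_neg] at hinv
  linarith

lemma setIntegral_closedBall_coord_sq_eq (R : ℝ) (j k : ι) :
    ∫ x in closedBall (0 : EuclideanSpace ℝ ι) R, x j ^ 2 =
      ∫ x in closedBall (0 : EuclideanSpace ℝ ι) R, x k ^ 2 := by
  classical
  let swap : EuclideanSpace ℝ ι ≃ₗᵢ[ℝ] EuclideanSpace ℝ ι :=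
    LinearIsometryEquiv.piLpCongrLeft 2 ℝ ℝ (Equiv.swap j k)
  have hswap (x : EuclideanSpace ℝ ι) : swap x k = x j := by
    simp [swap, LinearIsometryEquiv.piLpCongrLeft_apply, Equiv.piCongrLeft']
  simpa only [hswap] using
    setIntegral_closedBall_comp_linearIsometryEquiv swap R fun x => x k ^ 2

lemma setIntegral_closedBall_coord_sq {R : ℝ} (hR : 0 ≤ R) (j : ι) :
    ∫ x in closedBall (0 : EuclideanSpace ℝ ι) R, x j ^ 2 =
      R ^ 2 / (Fintype.card ι + 2) * volume.real (closedBall (0 : EuclideanSpace ℝ ι) R) := by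
  have : Nonempty ι := ⟨j⟩
  have hcard : (Fintype.card ι : ℝ) ≠ 0 := by positivity
  apply mul_left_cancel₀ hcard
  calc Fintype.card ι * ∫ x in closedBall (0 : EuclideanSpace ℝ ι) R, x j ^ 2
      = ∑ i, ∫ x in closedBall (0 : EuclideanSpace ℝ ι) R, x i ^ 2 := by
        simp_rw [fun i => setIntegral_closedBall_coord_sq_eq R i j, sum_const, card_univ,
          nsmul_eq_mul]
    _ = ∫ x in closedBall (0 : EuclideanSpace ℝ ι) R, ‖x‖ ^ 2 := by
        simp_rw [EuclideanSpace.real_norm_sq_eq]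
        refine (integral_finsetSum _ fun i _ => ?_).symm
        simp_rw [sq]
        exact integrableOn_closedBall_coord_mul_coord R i i
    _ = _ := by
        rw [setIntegral_closedBall_norm_pow volume 2 hR, finrank_euclideanSpace]
        push_cast
        ring

lemma isProbabilityMeasure_cond_closedBall {R : ℝ} (hR : 0 < R) :
    IsProbabilityMeasure
      (volume : Measure (EuclideanSpace ℝ ι))[|closedBall (0 : EuclideanSpace ℝ ι) R] :=
  cond_isProbabilityMeasure_of_finite (measure_closedBall_pos volume _ hR).ne'
    measure_closedBall_lt_top.ne

lemma integral_cond_closedBall_coord_mul_coord [DecidableEq ι] {R : ℝ} (hR : 0 < R) (j k : ι) :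
    ∫ x, x j * x k ∂(volume : Measure (EuclideanSpace ℝ ι))[|closedBall 0 R] =
      if j = k then R ^ 2 / (Fintype.card ι + 2) else 0 := by
  have hvol : volume.real (closedBall (0 : EuclideanSpace ℝ ι) R) ≠ 0 :=
    (ENNReal.toReal_pos (measure_closedBall_pos volume _ hR).ne' measure_closedBall_lt_top.ne).ne'
  rw [ProbabilityTheory.cond, integral_smul_measure, ENNReal.toReal_inv, ← measureReal_def,
    smul_eq_mul]
  split_ifs with hjk
  · subst hjk
    simp_rw [← sq, setIntegral_closedBall_coord_sq hR.le]
    field_simp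
  · rw [setIntegral_closedBall_coord_mul_coord_of_ne R hjk, mul_zero]

end UniformBall

section FrameOperator

variable {ι : Type*}

lemma integrable_coord_mul_coord_of_norm_sq_le [Fintype ι] {μ : Measure (EuclideanSpace ℝ ι)}
    [IsFiniteMeasure μ] {ρ : ℝ} (hρ : ∀ᵐ x ∂μ, ‖x‖ ^ 2 ≤ ρ) (j k : ι) :
    Integrable (fun x : EuclideanSpace ℝ ι => x j * x k) μ := by
  refine .of_bound (by fun_prop) ρ ?_
  filter_upwards [hρ] with x hx
  calc ‖x j * x k‖ = ‖x j‖ * ‖x k‖ := norm_mul _ _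
    _ ≤ ‖x‖ * ‖x‖ := by gcongr <;> exact PiLp.norm_apply_le x _
    _ ≤ ρ := by rwa [← sq]

variable [DecidableEq ι]

/-- The matrix `x xᵀ - a I`, the contribution of one vector to the deviation of the frame operator
from a multiple of the identity. It is encoded as the Euclidean vector of its entries, so that its
norm is the Frobenius norm. -/
def rankOneSubScalar (a : ℝ) (x : EuclideanSpace ℝ ι) : EuclideanSpace ℝ (ι × ι) :=
  WithLp.toLp 2 fun p => x p.1 * x p.2 - if p.1 = p.2 then a else 0

@[simp]
lemma rankOneSubScalar_apply (a : ℝ) (x : EuclideanSpace ℝ ι) (p : ι × ι) :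
    rankOneSubScalar a x p = x p.1 * x p.2 - if p.1 = p.2 then a else 0 :=
  rfl

lemma measurable_rankOneSubScalar (a : ℝ) :
    Measurable (rankOneSubScalar a : EuclideanSpace ℝ ι → EuclideanSpace ℝ (ι × ι)) := by
  unfold rankOneSubScalar
  fun_prop

variable [Fintype ι]

lemma norm_rankOneSubScalar_sq (a : ℝ) (x : EuclideanSpace ℝ ι) :
    ‖rankOneSubScalar a x‖ ^ 2 = (‖x‖ ^ 2) ^ 2 - 2 * a * ‖x‖ ^ 2 + Fintype.card ι * a ^ 2 := by
  have hentry (j k : ι) : rankOneSubScalar a x (j, k) ^ 2 =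
      x j ^ 2 * x k ^ 2 - if j = k then 2 * a * x j ^ 2 - a ^ 2 else 0 := by
    simp only [rankOneSubScalar_apply]
    split_ifs with hjk
    · subst hjk
      ring
    · ring
  simp_rw [EuclideanSpace.real_norm_sq_eq, Fintype.sum_prod_type, hentry, sum_sub_distrib,
    sum_ite_eq, Finset.mem_univ, if_true, sum_sub_distrib, ← mul_sum, ← sum_mul, sum_const,
    card_univ, nsmul_eq_mul]
  ring

lemma norm_rankOneSubScalar_sq_le {a ρ : ℝ} (haρ : 2 * a ≤ ρ) {x : EuclideanSpace ℝ ι}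
    (hx : ‖x‖ ^ 2 ≤ ρ) :
    ‖rankOneSubScalar a x‖ ^ 2 ≤ ρ ^ 2 - 2 * a * ρ + Fintype.card ι * a ^ 2 := by
  rw [norm_rankOneSubScalar_sq]
  nlinarith [sq_nonneg ‖x‖]

lemma integral_rankOneSubScalar_eq_zero {μ : Measure (EuclideanSpace ℝ ι)} [IsProbabilityMeasure μ]
    {a : ℝ} (hint : ∀ j k, Integrable (fun x => x j * x k) μ)
    (hmean : ∀ j k, ∫ x, x j * x k ∂μ = if j = k then a else 0) :
    ∫ x, rankOneSubScalar a x ∂μ = 0 := by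
  have hentry_int (p : ι × ι) : Integrable (fun x => rankOneSubScalar a x p) μ :=
    (hint p.1 p.2).sub (integrable_const _)
  ext p
  rw [eval_integral_piLp hentry_int]
  simp_rw [rankOneSubScalar_apply]
  rw [integral_sub (hint p.1 p.2) (integrable_const _), hmean]
  simp

variable {d n : ℕ}

lemma norm_sum_rankOneSubScalar (hn : n ≠ 0) (x : Fin n → EuclideanSpace ℝ (Fin d)) :
    ‖∑ i, rankOneSubScalar (1 / n) (x i)‖ = frobNormFrameOpSubId x := by
  have hn_inv : (n : ℝ) * (1 / n) = 1 := mul_one_div_cancel (by exact_mod_cast hn)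
  simp_rw [EuclideanSpace.norm_eq, frobNormFrameOpSubId, Fintype.sum_prod_type, WithLp.ofLp_sum,
    Finset.sum_apply, rankOneSubScalar_apply, sum_sub_distrib, sum_const, card_univ,
    Fintype.card_fin, nsmul_eq_mul, mul_ite, mul_zero, hn_inv, norm_eq_abs, sq_abs]

theorem measureReal_le_frobNormFrameOpSubId_le (hn : n ≠ 0)
    (μ : Measure (EuclideanSpace ℝ (Fin d))) [IsProbabilityMeasure μ] {ρ : ℝ} (hnρ : 2 / n ≤ ρ)
    (hρ : ∀ᵐ x ∂μ, ‖x‖ ^ 2 ≤ ρ)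
    (hmean : ∀ j k, ∫ x, x j * x k ∂μ = if j = k then (1 / n : ℝ) else 0)
    {ε : ℝ} (hε : 0 ≤ ε) :
    (Measure.pi fun _ : Fin n => μ).real {x | ε ≤ frobNormFrameOpSubId x} ≤
      2 * exp (-ε ^ 2 / (2 * (n * (ρ ^ 2 - 2 * (1 / n) * ρ + d * (1 / n) ^ 2)))) := by
  have hY : Measurable (rankOneSubScalar (1 / n : ℝ) : EuclideanSpace ℝ (Fin d) → _) :=
    measurable_rankOneSubScalar _
  set v := ρ ^ 2 - 2 * (1 / n) * ρ + d * (1 / n : ℝ) ^ 2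
  have hnorm : ∀ᵐ x ∂μ, ‖rankOneSubScalar (1 / n) x‖ ^ 2 ≤ v := by
    filter_upwards [hρ] with x hx
    simpa only [Fintype.card_fin] using norm_rankOneSubScalar_sq_le (by rwa [mul_one_div]) hx
  have hv : 0 ≤ v := by
    obtain ⟨x, hx⟩ := hnorm.exists
    exact (sq_nonneg _).trans hx
  have hoeffding := measureReal_norm_sum_ge_le_of_iIndepFun (b := fun _ => √v)
    (iIndepFun_pi fun _ : Fin n => hY.aemeasurable (μ := μ))
    (fun i => (hY.comp (measurable_pi_apply i)).aemeasurable)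
    (fun i => (Measure.quasiMeasurePreserving_eval (fun _ : Fin n => μ) i).ae
      (hnorm.mono fun _ => le_sqrt_of_sq_le))
    (fun i => (integral_comp_eval (μ := fun _ : Fin n => μ) (i := i) hY.aestronglyMeasurable).trans
      (integral_rankOneSubScalar_eq_zero (integrable_coord_mul_coord_of_norm_sq_le hρ) hmean))
    Finset.univ hε
  simpa only [norm_sum_rankOneSubScalar hn, sq_sqrt hv, sum_const, card_univ, Fintype.card_fin,
    nsmul_eq_mul] using hoeffding

end FrameOperator

lemma two_mul_exp_le_sq_mul_exp {d : ℝ} (hd : 2 ≤ d) {u : ℝ} (hu : 0 ≤ u) :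
    2 * exp (-u / (2 * (d * (d + 3)))) ≤ d ^ 2 * exp (-(1 / 4 * u) / d ^ 3) := by
  gcongr ?_ * exp ?_
  · nlinarith
  · have hcubic : 2 * (d * (d + 3)) ≤ 4 * d ^ 3 := by nlinarith [sq_nonneg d]
    rw [neg_div, neg_div, neg_le_neg_iff, div_le_div_iff₀ (by positivity) (by positivity)]
    linarith [mul_le_mul_of_nonneg_left hcubic hu]

theorem ball_concentration_frobeniusNorm_general (d n : ℕ) (hd : 1 ≤ d) (hn : 1 ≤ n) (ε : ℝ)
    (hε : 0 ≤ ε) :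
    (Measure.pi fun _ : Fin n =>
        (volume : Measure (EuclideanSpace ℝ (Fin d)))[|
          closedBall (0 : EuclideanSpace ℝ (Fin d)) √((d + 2) / n)])
        {x | ε ≤ frobNormFrameOpSubId x}
      ≤ ENNReal.ofReal (2 * exp (-(n * ε ^ 2) / (2 * (d * (d + 3))))) := by
  have hradius : 0 < √((d + 2) / n : ℝ) := sqrt_pos.2 (by positivity)
  have hradius_sq : √((d + 2) / n : ℝ) ^ 2 = (d + 2) / n := sq_sqrt (by positivity)
  have := isProbabilityMeasure_cond_closedBall (ι := Fin d) hradius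
  rw [← ofReal_measureReal]
  refine ENNReal.ofReal_le_ofReal ((measureReal_le_frobNormFrameOpSubId_le (by omega) _
    (ρ := (d + 2) / n) (by gcongr; linarith [d.cast_nonneg (α := ℝ)]) ?_ ?_ hε).trans_eq ?_)
  · filter_upwards [ae_cond_mem isClosed_closedBall.measurableSet] with x hx
    rw [← hradius_sq]
    gcongr
    exact mem_closedBall_zero_iff.1 hx
  · intro j k
    rw [integral_cond_closedBall_coord_mul_coord hradius, hradius_sq, Fintype.card_fin]
    field_simp
  · have hvariance : n * (((d + 2) / n : ℝ) ^ 2 - 2 * (1 / n) * ((d + 2) / n) +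
        d * (1 / n) ^ 2) = d * (d + 3) / n := by
      field_simp
      ring
    rw [hvariance]
    field_simp

/-- **Concentration in the ball, Frobenius norm.**
There is an absolute constant `c > 0` such that for all `d ≥ 2` and `n ≥ 1`: if
`x₁, …, xₙ` are i.i.d. uniform on the closed Euclidean ball of radius `√((d+2)/n)` in `ℝ^d`
(the uniform measure being the normalized restriction of Lebesgue measure to the ball),
then for every `ε ≥ 0`, `ℙ(‖S - I‖_F ≥ ε) ≤ d² · exp(-cnε²/d³)`. -/
theorem ball_concentration_frobeniusNorm :
    ∃ c : ℝ, 0 < c ∧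
      ∀ (d n : ℕ), 2 ≤ d → 1 ≤ n → ∀ ε : ℝ, 0 ≤ ε →
        (Measure.pi fun _ : Fin n =>
            (volume : Measure (EuclideanSpace ℝ (Fin d)))[|
              Metric.closedBall (0 : EuclideanSpace ℝ (Fin d))
                (Real.sqrt ((d + 2) / n))])
            {x | ε ≤ frobNormFrameOpSubId x}
          ≤ ENNReal.ofReal
              ((d : ℝ) ^ 2 * Real.exp (-(c * n * ε ^ 2) / d ^ 3)) := by
  refine ⟨1 / 4, by norm_num, fun d n hd hn ε hε => ?_⟩
  refine (ball_concentration_frobeniusNorm_general d n (by omega) hn ε hε).trans ?_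
  rw [mul_assoc (1 / 4 : ℝ)]
  exact ENNReal.ofReal_le_ofReal
    (two_mul_exp_le_sq_mul_exp (by exact_mod_cast hd) (by positivity))
end
end
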